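/- arXiv:0704.0028 — 2 statements merged into one kernel-verified Lean document; each statement's English description precedes it below -/
import Mathlib

section
/- Let A and B be real n×n matrices with A antisymmetric and B symmetric positive definite, and let p_0, ..., p_{⌊n/2⌋} be the real coefficients defined by the polynomial identity (−1)^{⌊n/2⌋} · pf [[−λA, B], [−B, A]] = Σ_{t=0}^{⌊n/2⌋} p_t λ^t (as polynomials in the real variable λ). Then p_t > 0 for all t with 2t ≤ rank A, and p_t = 0 for all t with 2t > rank A. -/
open Matrix BigOperators

/-- The pfaffian of a `2m × 2m` real matrix, via the symmetrized sum over all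
permutations. -/
noncomputable def pf {m : ℕ} (C : Matrix (Fin (2 * m)) (Fin (2 * m)) ℝ) : ℝ :=
  (1 / (m.factorial * 2 ^ m) : ℝ) *
    ∑ π : Equiv.Perm (Fin (2 * m)),
      ((Equiv.Perm.sign π : ℤ) : ℝ) *
        ∏ i : Fin m, C (π ⟨2 * i.val, by omega⟩) (π ⟨2 * i.val + 1, by omega⟩)

/-- The equivalence used to view a block `2n × 2n` matrix (indexed by `Fin n ⊕ Fin n`)
as a matrix indexed by `Fin (2 * n)`. -/
def blockIndex (n : ℕ) : (Fin n ⊕ Fin n) ≃ Fin (2 * n) :=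
  finSumFinEquiv.trans (finCongr (by omega))

open Equiv

/-!
Congruence by a unipotent block matrix kills the upper left corner:
`[[1, s], [0, 1]] * [[-s²A, B], [-B, A]] * [[1, s], [0, 1]]ᵀ = [[0, D], [-Dᵀ, A]]` with
`D = B + sA`, and `pf [[0, D], [-Dᵀ, A]] = (-1) ^ ⌊n/2⌋ * det D`, whatever the antisymmetric `A`.
So `q(λ) = ∑ pₜ λᵗ` satisfies `q(s²) = det (B + sA)`.

Writing `B = SᵀS` and `A = SᵀA'S`, transposition gives `det (1 + sA') = det (1 - sA')`, hence
`det (1 + sA')² = det (1 + s²A'A'ᵀ)` and `q(λ)² = (det B)² ∏ (1 + μᵢλ)`, where the `μᵢ ≥ 0` are the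
eigenvalues of `A'A'ᵀ`, of which exactly `rank A` are nonzero. Therefore `q` splits into linear
factors over `ℝ`, all its roots are negative, and its degree is half the rank of `A`; since
`q(0) = det B > 0`, its coefficients up to the degree are positive.
-/

section PairPerm

variable {ι : Type*}

/-- The permutation of `ι ⊕ ι` that sends the pair `{inl i, inr i}` onto the pair
`{inl (g i), inr (g i)}` and acts by `s i` inside it, `false` and `true` standing for `inl` and
`inr`. These are the permutations preserving the partition of `ι ⊕ ι` into pairs. -/
def pairPerm (g : Perm ι) (s : ι → Perm Bool) : Perm (ι ⊕ ι) :=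
  (boolProdEquivSum ι).permCongr (prodCongrRight (fun _ => g) * prodCongrLeft s)

theorem pairPerm_inl (g : Perm ι) (s : ι → Perm Bool) (i : ι) :
    pairPerm g s (.inl i) = boolProdEquivSum ι (s i false, g i) := rfl

theorem pairPerm_inr (g : Perm ι) (s : ι → Perm Bool) (i : ι) :
    pairPerm g s (.inr i) = boolProdEquivSum ι (s i true, g i) := rfl

theorem sign_pairPerm [Fintype ι] [DecidableEq ι] (g : Perm ι) (s : ι → Perm Bool) :
    Perm.sign (pairPerm g s) = ∏ i, Perm.sign (s i) := by
  simp [pairPerm, Perm.sign_permCongr, Perm.sign_mul, Perm.sign_prodCongrRight,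
    Perm.sign_prodCongrLeft]

theorem pairPerm_injective :
    Function.Injective fun gs : Perm ι × (ι → Perm Bool) => pairPerm gs.1 gs.2 := by
  rintro ⟨g, s⟩ ⟨g', s'⟩ h
  have apply_eq (b : Bool) (i : ι) : (s i b, g i) = (s' i b, g' i) := by
    apply (boolProdEquivSum ι).injective
    cases b
    · exact DFunLike.congr_fun h (.inl i)
    · exact DFunLike.congr_fun h (.inr i)
  ext i
  · exact congrArg Prod.snd (apply_eq true i)
  · exact congrArg Prod.fst (apply_eq _ i)

theorem exists_pairPerm_eq [Finite ι] (π : Perm (ι ⊕ ι))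
    (hπ : ∀ i, π (.inr i) = (π (.inl i)).swap) : ∃ g s, pairPerm g s = π := by
  have injective : Function.Injective fun i => Sum.elim id id (π (.inl i)) := by
    intro i j hij
    have eq_or_eq_swap : π (.inl i) = π (.inl j) ∨ π (.inl i) = (π (.inl j)).swap := by
      rcases hi : π (.inl i) with x | x <;> rcases hj : π (.inl j) with y | y <;> simp_all
    rcases eq_or_eq_swap with h | h
    · exact Sum.inl_injective (π.injective h)
    · rw [← hπ] at h
      exact absurd (π.injective h) Sum.inl_ne_inr
  let g : Perm ι := .ofBijective _ (Finite.injective_iff_bijective.mp injective)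
  let s (i : ι) : Perm Bool := if (π (.inl i)).isRight then swap false true else 1
  have hg (i : ι) : g i = Sum.elim id id (π (.inl i)) := rfl
  refine ⟨g, s, Equiv.ext fun x => ?_⟩
  rcases x with i | i
  · rcases h : π (.inl i) with x | x <;> simp [pairPerm_inl, hg, s, h]
  · rcases h : π (.inl i) with x | x <;> simp [pairPerm_inr, hπ, hg, s, h]

end PairPerm

section NegJ

variable {ι R : Type*} [DecidableEq ι] [CommRing R]

theorem neg_J_apply_eq_zero {a b : ι ⊕ ι} (h : b ≠ a.swap) : (-J ι R) a b = 0 := by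
  rcases a with i | i <;> rcases b with j | j <;> simp_all [J, eq_comm]

theorem neg_J_apply_perm_bool (f : Perm Bool) (i : ι) :
    (-J ι R) (boolProdEquivSum ι (f false, i)) (boolProdEquivSum ι (f true, i)) =
      ((Perm.sign f : ℤ) : R) := by
  have eq_one_or_eq_swap : f = 1 ∨ f = swap false true := by decide +revert
  rcases eq_one_or_eq_swap with rfl | rfl <;> simp [J]

end NegJ

section UnnormalizedPfaffian

variable {ι R : Type*} [Fintype ι] [DecidableEq ι] [CommRing R]

/-- The pfaffian of a matrix on `ι ⊕ ι` without its normalizing factor `1 / (m! 2 ^ m)`, so that it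
makes sense over every commutative ring. The index `inl i` plays the role of `2i` and `inr i` that
of `2i + 1`. -/
def unnormalizedPf (C : Matrix (ι ⊕ ι) (ι ⊕ ι) R) : R :=
  ∑ π : Perm (ι ⊕ ι), ((Perm.sign π : ℤ) : R) * ∏ i, C (π (.inl i)) (π (.inr i))

theorem unnormalizedPf_mul_mul_transpose_eq_sum (X C : Matrix (ι ⊕ ι) (ι ⊕ ι) R) :
    unnormalizedPf (X * C * Xᵀ) = ∑ f : ι → ι ⊕ ι, ∑ g : ι → ι ⊕ ι,
      (∏ i, C (f i) (g i)) * (X.submatrix id (Sum.elim f g)).det := by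
  have entry (a b : ι ⊕ ι) : (X * C * Xᵀ) a b = ∑ k, ∑ l, X a k * C k l * X b l := by
    rw [Matrix.mul_assoc]
    simp only [Matrix.mul_apply, transpose_apply, Finset.mul_sum, mul_assoc]
  simp only [unnormalizedPf, entry, Finset.prod_univ_sum, Fintype.piFinset_univ, Finset.mul_sum,
    det_apply']
  rw [Finset.sum_comm]
  refine Finset.sum_congr rfl fun f _ => ?_
  rw [Finset.sum_comm]
  refine Finset.sum_congr rfl fun g _ => Finset.sum_congr rfl fun π _ => ?_
  simp only [Fintype.prod_sum_type, Finset.prod_mul_distrib, submatrix_apply, id, Sum.elim_inl,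
    Sum.elim_inr]
  ring

theorem unnormalizedPf_mul_mul_transpose (X C : Matrix (ι ⊕ ι) (ι ⊕ ι) R) :
    unnormalizedPf (X * C * Xᵀ) = X.det * unnormalizedPf C := by
  have submatrix_id_eq (F : ι ⊕ ι → ι ⊕ ι) :
      X.submatrix id F = X * (1 : Matrix (ι ⊕ ι) (ι ⊕ ι) R).submatrix id F := by
    ext a b
    simp [Matrix.mul_apply, Matrix.one_apply]
  calc unnormalizedPf (X * C * Xᵀ)
      = X.det * unnormalizedPf (1 * C * (1 : Matrix (ι ⊕ ι) (ι ⊕ ι) R)ᵀ) := by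
        simp only [unnormalizedPf_mul_mul_transpose_eq_sum, Finset.mul_sum, submatrix_id_eq,
          det_mul, mul_left_comm]
    _ = X.det * unnormalizedPf C := by simp

theorem unnormalizedPf_submatrix_perm (C : Matrix (ι ⊕ ι) (ι ⊕ ι) R) (τ : Perm (ι ⊕ ι)) :
    unnormalizedPf (C.submatrix τ τ) = ((Perm.sign τ : ℤ) : R) * unnormalizedPf C := by
  have submatrix_eq : C.submatrix τ τ = τ.permMatrix R * C * (τ.permMatrix R)ᵀ := by
    rw [transpose_permMatrix, PEquiv.toMatrix_toPEquiv_mul, PEquiv.mul_toMatrix_toPEquiv]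
    rfl
  rw [submatrix_eq, unnormalizedPf_mul_mul_transpose, det_permutation]

theorem unnormalizedPf_neg_J :
    unnormalizedPf (-J ι R) = (Fintype.card ι).factorial * 2 ^ Fintype.card ι := by
  calc unnormalizedPf (-J ι R)
      = ∑ _gs : Perm ι × (ι → Perm Bool), (1 : R) := by
        refine (Fintype.sum_of_injective _ pairPerm_injective _ _ (fun π hπ => ?_) ?_).symm
        · obtain ⟨i, hi⟩ : ∃ i, π (.inr i) ≠ (π (.inl i)).swap := by
            by_contra! hswap
            obtain ⟨g, s, hgs⟩ := exists_pairPerm_eq π hswap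
            exact hπ ⟨(g, s), hgs⟩
          rw [Finset.prod_eq_zero (Finset.mem_univ i) (neg_J_apply_eq_zero hi), mul_zero]
        · rintro ⟨g, s⟩
          simp only [pairPerm_inl, pairPerm_inr, sign_pairPerm, Units.coe_prod, Int.cast_prod,
            neg_J_apply_perm_bool, ← Finset.prod_mul_distrib, ← Int.cast_mul,
            Int.units_coe_mul_self, Int.cast_one, Finset.prod_const_one]
    _ = (Fintype.card ι).factorial * 2 ^ Fintype.card ι := by
        simp [Fintype.card_perm]

theorem unnormalizedPf_fromBlocks_zero_neg_transpose [Invertible (2 : R)] {A : Matrix ι ι R}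
    (hA : Aᵀ = -A) (D : Matrix ι ι R) :
    unnormalizedPf (fromBlocks 0 D (-Dᵀ) A) =
      D.det * ((Fintype.card ι).factorial * 2 ^ Fintype.card ι) := by
  -- The antisymmetric `A` is absorbed by its half: `⅟2 • A - (⅟2 • A)ᵀ = A`.
  have fromBlocks_eq : fromBlocks 0 D (-Dᵀ) A =
      fromBlocks D 0 (⅟(2 : R) • A) 1 * (-J ι R) * (fromBlocks D 0 (⅟(2 : R) • A) 1)ᵀ := by
    simp [J, fromBlocks_neg, fromBlocks_transpose, fromBlocks_multiply, hA, ← add_smul]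
  rw [fromBlocks_eq, unnormalizedPf_mul_mul_transpose, unnormalizedPf_neg_J,
    det_fromBlocks_zero₁₂, det_one, mul_one]

theorem unnormalizedPf_fromBlocks_neg_sq_smul [Invertible (2 : R)] {A B : Matrix ι ι R}
    (hA : Aᵀ = -A) (hB : Bᵀ = B) (s : R) :
    unnormalizedPf (fromBlocks (-(s ^ 2 • A)) B (-B) A) =
      (B + s • A).det * ((Fintype.card ι).factorial * 2 ^ Fintype.card ι) := by
  have mul_mul_transpose_eq : fromBlocks 1 (s • 1) 0 1 * fromBlocks (-(s ^ 2 • A)) B (-B) A *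
      (fromBlocks 1 (s • 1) 0 1 : Matrix (ι ⊕ ι) (ι ⊕ ι) R)ᵀ =
        fromBlocks 0 (B + s • A) (-(B + s • A)ᵀ) A := by
    simp only [fromBlocks_transpose, fromBlocks_multiply, transpose_add, transpose_smul,
      transpose_zero, transpose_one, hA, hB, mul_neg, mul_smul_comm, smul_mul_assoc, zero_mul,
      mul_zero, one_mul, mul_one]
    congr 1 <;> module
  rw [← unnormalizedPf_fromBlocks_zero_neg_transpose hA, ← mul_mul_transpose_eq,
    unnormalizedPf_mul_mul_transpose, det_fromBlocks_zero₂₁]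
  simp

end UnnormalizedPfaffian

section BlockPfaffian

theorem sign_symm_trans_eq_prod_inversions {κ : Type*} [Fintype κ] {N : ℕ} (e f : κ ≃ Fin N) :
    Perm.sign (e.symm.trans f) = ∏ b, ∏ a, if e a < e b ∧ f b < f a then -1 else 1 := by
  rw [Perm.sign_eq_prod_prod_Iio, ← e.prod_comp]
  refine Finset.prod_congr rfl fun b _ => ?_
  rw [← Finset.filter_gt_eq_Iio, Finset.prod_filter, ← e.prod_comp]
  refine Finset.prod_congr rfl fun a _ => ?_
  have f_ne (h : e a < e b) : f a ≠ f b := fun hf => by simp [f.injective hf] at h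
  by_cases h : e a < e b
  · rcases (f_ne h).lt_or_gt with hf | hf <;> simp [h, hf, hf.not_gt]
  · simp [h]

theorem prod_neg_one_pow_fin_val {M : Type*} [CommMonoid M] [HasDistribNeg M] (n : ℕ) :
    ∏ i : Fin n, (-1 : M) ^ (i : ℕ) = (-1) ^ (n / 2) := by
  induction n with
  | zero => simp
  | succ n ih =>
    simp only [Fin.prod_univ_castSucc, Fin.val_castSucc, Fin.val_last, ih, ← pow_add]
    obtain ⟨k, hk⟩ := n.even_or_odd'
    exact neg_one_pow_congr (by simp only [Nat.even_iff]; omega)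

/-- The ordering of `Fin n ⊕ Fin n` in which every pair `inl i`, `inr i` is consecutive: `inl i` is
sent to `2i` and `inr i` to `2i + 1`. -/
noncomputable def interleave (n : ℕ) : Fin n ⊕ Fin n ≃ Fin (2 * n) :=
  .ofBijective (Sum.elim (fun i => ⟨2 * i, by omega⟩) fun i => ⟨2 * i + 1, by omega⟩) <| by
    refine (Fintype.bijective_iff_injective_and_card _).mpr ⟨?_, by simp [two_mul]⟩
    rintro (i | i) (j | j) h <;> grind

theorem interleave_inl {n : ℕ} (i : Fin n) : interleave n (.inl i) = ⟨2 * i, by omega⟩ := rfl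

theorem interleave_inr {n : ℕ} (i : Fin n) : interleave n (.inr i) = ⟨2 * i + 1, by omega⟩ := rfl

theorem pf_eq_unnormalizedPf {n : ℕ} (C : Matrix (Fin (2 * n)) (Fin (2 * n)) ℝ) :
    pf C = 1 / (n.factorial * 2 ^ n) *
      unnormalizedPf (C.submatrix (interleave n) (interleave n)) := by
  unfold pf unnormalizedPf
  congr 1
  refine (Fintype.sum_equiv (interleave n).permCongr _ _ fun π => ?_).symm
  simp [Perm.sign_permCongr, permCongr_apply, ← interleave_inl, ← interleave_inr]

theorem sign_blockIndex_symm_trans_interleave (n : ℕ) :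
    Perm.sign ((blockIndex n).symm.trans (interleave n)) = (-1) ^ (n / 2) := by
  have blockIndex_inl (i : Fin n) : (blockIndex n (.inl i) : ℕ) = i := by simp [blockIndex]
  have blockIndex_inr (i : Fin n) : (blockIndex n (.inr i) : ℕ) = n + i := by
    simp [blockIndex, add_comm]
  have inversion_iff (a b : Fin n ⊕ Fin n) :
      (blockIndex n a < blockIndex n b ∧ interleave n b < interleave n a) ↔
        ∃ i j, a = .inl i ∧ b = .inr j ∧ j < i := by
    rw [Fin.lt_def, Fin.lt_def]
    rcases a with i | i <;> rcases b with j | j <;>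
      grind [interleave_inl, interleave_inr]
  calc Perm.sign ((blockIndex n).symm.trans (interleave n))
      = ∏ j : Fin n, ∏ i : Fin n, if j < i then -1 else 1 := by
        rw [sign_symm_trans_eq_prod_inversions]
        simp [inversion_iff]
    _ = ∏ i : Fin n, (-1) ^ (i : ℕ) := by
        rw [Finset.prod_comm]
        simp only [← Finset.prod_filter, Finset.prod_const, Finset.filter_gt_eq_Iio, Fin.card_Iio]
    _ = (-1) ^ (n / 2) := prod_neg_one_pow_fin_val n

theorem pf_submatrix_blockIndex {n : ℕ} (M : Matrix (Fin n ⊕ Fin n) (Fin n ⊕ Fin n) ℝ) :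
    pf (M.submatrix (blockIndex n).symm (blockIndex n).symm) =
      (-1) ^ (n / 2) * (1 / (n.factorial * 2 ^ n) * unnormalizedPf M) := by
  have sign_eq : Perm.sign ((interleave n).trans (blockIndex n).symm) = (-1) ^ (n / 2) := by
    rw [← sign_blockIndex_symm_trans_interleave, ← Perm.sign_permCongr (interleave n)]
    congr 1
    ext x
    simp [permCongr_apply]
  have submatrix_eq : (M.submatrix (blockIndex n).symm (blockIndex n).symm).submatrix
      (interleave n) (interleave n) = M.submatrix ((interleave n).trans (blockIndex n).symm)
        ((interleave n).trans (blockIndex n).symm) := rfl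
  rw [pf_eq_unnormalizedPf, submatrix_eq, unnormalizedPf_submatrix_perm, sign_eq]
  push_cast
  ring

theorem neg_one_pow_mul_pf_fromBlocks {n : ℕ} {A B : Matrix (Fin n) (Fin n) ℝ} (hA : Aᵀ = -A)
    (hB : Bᵀ = B) (s : ℝ) :
    (-1) ^ (n / 2) * pf ((fromBlocks (-(s ^ 2 • A)) B (-B) A).submatrix
      (blockIndex n).symm (blockIndex n).symm) = (B + s • A).det := by
  rw [pf_submatrix_blockIndex, unnormalizedPf_fromBlocks_neg_sq_smul hA hB, Fintype.card_fin,
    ← mul_assoc, ← mul_pow, neg_one_mul, neg_neg, one_pow, one_mul]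
  field_simp

end BlockPfaffian

section Determinants

open scoped MatrixOrder

variable {ι : Type*} [Fintype ι] [DecidableEq ι]

theorem det_one_add_smul_eq_prod_eigenvalues {𝕜 : Type*} [RCLike 𝕜] {H : Matrix ι ι 𝕜}
    (hH : H.IsHermitian) (s : 𝕜) :
    (1 + s • H).det = ∏ i, (1 + s * (hH.eigenvalues i : 𝕜)) := by
  let D : Matrix ι ι 𝕜 := diagonal (RCLike.ofReal ∘ hH.eigenvalues)
  let U : Matrix ι ι 𝕜 := hH.eigenvectorUnitary
  have smul_eq : s • H = U * (s • D * star U) := by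
    conv_lhs => rw [hH.spectral_theorem, Unitary.conjStarAlgAut_apply]
    simp only [U, D, smul_mul_assoc, mul_smul_comm, Matrix.mul_assoc]
  have star_mul_self : star U * U = 1 := Unitary.coe_star_mul_self _
  rw [smul_eq, det_one_add_mul_comm, Matrix.mul_assoc, star_mul_self, Matrix.mul_one]
  have diagonal_eq : 1 + s • D = diagonal fun i => 1 + s * (hH.eigenvalues i : 𝕜) := by
    rw [← diagonal_one, ← diagonal_smul, diagonal_add]
    rfl
  rw [diagonal_eq, det_diagonal]

theorem det_one_add_smul_sq_of_transpose_eq_neg {R : Type*} [CommRing R] {A : Matrix ι ι R}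
    (hA : Aᵀ = -A) (s : R) :
    (1 + s • A).det ^ 2 = (1 + s ^ 2 • (A * Aᵀ)).det := by
  calc (1 + s • A).det ^ 2
      = (1 + s • A).det * (1 + s • A)ᵀ.det := by rw [det_transpose, sq]
    _ = (1 + s ^ 2 • (A * Aᵀ)).det := by
        rw [← det_mul, transpose_add, transpose_smul, transpose_one, hA]
        congr 1
        simp only [add_mul, mul_add, one_mul, mul_one, mul_neg, smul_mul_smul_comm, sq, smul_neg]
        abel

theorem exists_det_one_add_smul_sq_eq_prod {A : Matrix ι ι ℝ} (hA : Aᵀ = -A) :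
    ∃ μ : ι → ℝ, (∀ i, 0 ≤ μ i) ∧ Fintype.card {i // μ i ≠ 0} = A.rank ∧
      ∀ s : ℝ, (1 + s • A).det ^ 2 = ∏ i, (1 + s ^ 2 * μ i) := by
  have posSemidef : (A * Aᵀ).PosSemidef := posSemidef_self_mul_conjTranspose A
  refine ⟨posSemidef.isHermitian.eigenvalues, posSemidef.eigenvalues_nonneg, ?_, fun s => ?_⟩
  · rw [← posSemidef.isHermitian.rank_eq_card_non_zero_eigs, rank_self_mul_transpose]
  · rw [det_one_add_smul_sq_of_transpose_eq_neg hA,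
      det_one_add_smul_eq_prod_eigenvalues posSemidef.isHermitian]
    rfl

theorem exists_det_add_smul_sq_eq_prod {A B : Matrix ι ι ℝ} (hA : Aᵀ = -A) (hB : B.PosDef) :
    ∃ μ : ι → ℝ, (∀ i, 0 ≤ μ i) ∧ Fintype.card {i // μ i ≠ 0} = A.rank ∧
      ∀ s : ℝ, (B + s • A).det ^ 2 = B.det ^ 2 * ∏ i, (1 + s ^ 2 * μ i) := by
  obtain ⟨S, hS, hBS⟩ := CStarAlgebra.isStrictlyPositive_iff_eq_star_mul_self.mp
    hB.isStrictlyPositive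
  have isUnit_det : IsUnit S.det := S.isUnit_iff_isUnit_det.mp hS
  have isUnit_det_transpose : IsUnit Sᵀ.det := by rwa [det_transpose]
  replace hBS : B = Sᵀ * S := hBS
  obtain ⟨A', hA', rfl⟩ : ∃ A', A'ᵀ = -A' ∧ A = Sᵀ * A' * S := by
    refine ⟨S⁻¹ᵀ * A * S⁻¹, by simp [hA, Matrix.mul_assoc], ?_⟩
    rw [transpose_nonsing_inv, Matrix.mul_assoc Sᵀ⁻¹, mul_nonsing_inv_cancel_left _ _
      isUnit_det_transpose, nonsing_inv_mul_cancel_right _ _ isUnit_det]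
  obtain ⟨μ, nonneg, card_eq, det_sq⟩ := exists_det_one_add_smul_sq_eq_prod hA'
  refine ⟨μ, nonneg, ?_, fun s => ?_⟩
  · rw [card_eq, rank_mul_eq_left_of_isUnit_det _ _ isUnit_det,
      rank_mul_eq_right_of_isUnit_det _ _ isUnit_det_transpose]
  · have factor : B + s • (Sᵀ * A' * S) = Sᵀ * (1 + s • A') * S := by
      rw [hBS, mul_add, add_mul, mul_one, mul_smul_comm, smul_mul_assoc]
    rw [factor, hBS, ← det_sq]
    simp only [det_mul]
    ring

end Determinants

section SplittingPolynomials

open Polynomial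

variable {ι F : Type*} [Fintype ι] [Field F] {q : F[X]} {c : F} {μ : ι → F}

theorem splits_of_sq_eq_C_mul_prod (hq0 : q ≠ 0)
    (hq : q ^ 2 = C c * ∏ i, (C (μ i) * X + 1)) : q.Splits := by
  refine Splits.of_dvd (g := q ^ 2) ?_ (pow_ne_zero _ hq0) (dvd_pow_self q two_ne_zero)
  rw [hq]
  exact (Splits.C c).mul (Splits.prod fun i _ => Splits.of_natDegree_le_one natDegree_linear_le)

theorem two_mul_natDegree_of_sq_eq_C_mul_prod [DecidableEq F] (hq0 : q ≠ 0)
    (hq : q ^ 2 = C c * ∏ i, (C (μ i) * X + 1)) :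
    2 * q.natDegree = Fintype.card {i // μ i ≠ 0} := by
  have rhs_ne_zero : C c * ∏ i, (C (μ i) * X + 1) ≠ 0 := hq ▸ pow_ne_zero 2 hq0
  have prod_ne_zero := right_ne_zero_of_mul rhs_ne_zero
  have natDegree_factor (i : ι) : (C (μ i) * X + 1).natDegree = if μ i ≠ 0 then 1 else 0 := by
    split_ifs with h
    · exact natDegree_linear h
    · simp [not_not.mp h]
  rw [← natDegree_pow, hq, natDegree_mul (left_ne_zero_of_mul rhs_ne_zero) prod_ne_zero,
    natDegree_C, zero_add, natDegree_prod _ _ (Finset.prod_ne_zero_iff.mp prod_ne_zero)]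
  simp only [natDegree_factor, Fintype.card_subtype, Finset.card_filter]

end SplittingPolynomials

section PositiveCoefficients

open Polynomial

theorem esymm_pos_of_forall_pos {R : Type*} [CommSemiring R] [PartialOrder R]
    [IsStrictOrderedRing R] {s : Multiset R} (hs : ∀ r ∈ s, 0 < r) {k : ℕ} (hk : k ≤ s.card) :
    0 < s.esymm k := by
  have powersetCard_ne_zero : s.powersetCard k ≠ 0 := by
    rw [← Multiset.card_pos, Multiset.card_powersetCard]
    exact Nat.choose_pos hk
  have prod_pos (u : Multiset R) (hu : u ∈ s.powersetCard k) : 0 < u.prod :=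
    Multiset.prod_pos fun r hr => hs r (Multiset.mem_of_le (Multiset.mem_powersetCard.mp hu).1 hr)
  simpa [Multiset.esymm] using Multiset.sum_lt_sum_of_nonempty powersetCard_ne_zero prod_pos

variable {K : Type*} [Field K] [LinearOrder K] [IsStrictOrderedRing K] {q : K[X]}

theorem coeff_pos_of_splits_of_roots_neg (hq : q.Splits) (hroots : ∀ r ∈ q.roots, r < 0)
    (h0 : 0 < q.coeff 0) {t : ℕ} (ht : t ≤ q.natDegree) : 0 < q.coeff t := by
  have coeff_eq (j : ℕ) (hj : j ≤ q.natDegree) :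
      q.coeff j = q.leadingCoeff * (q.roots.map Neg.neg).esymm (q.natDegree - j) := by
    rw [coeff_eq_esymm_roots_of_splits hq hj, Multiset.esymm_neg, mul_assoc]
  have esymm_pos (j : ℕ) : 0 < (q.roots.map Neg.neg).esymm (q.natDegree - j) := by
    refine esymm_pos_of_forall_pos (fun r hr => ?_) ?_
    · obtain ⟨a, ha, rfl⟩ := Multiset.mem_map.mp hr
      exact neg_pos.mpr (hroots a ha)
    · rw [Multiset.card_map, ← hq.natDegree_eq_card_roots]
      exact Nat.sub_le _ _
  have leadingCoeff_pos : 0 < q.leadingCoeff := by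
    rw [coeff_eq 0 (Nat.zero_le _)] at h0
    exact pos_of_mul_pos_left h0 (esymm_pos 0).le
  rw [coeff_eq t ht]
  exact mul_pos leadingCoeff_pos (esymm_pos t)

theorem coeff_pos_of_sq_eq_C_mul_prod {ι : Type*} [Fintype ι] {c : K} {μ : ι → K}
    (hμ : ∀ i, 0 ≤ μ i) (h0 : 0 < q.coeff 0) (hq : q ^ 2 = C c * ∏ i, (C (μ i) * X + 1))
    {t : ℕ} (ht : t ≤ q.natDegree) : 0 < q.coeff t := by
  have q_ne_zero : q ≠ 0 := by
    rintro rfl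
    simp at h0
  have c_ne_zero : c ≠ 0 := by
    rintro rfl
    simp [q_ne_zero] at hq
  refine coeff_pos_of_splits_of_roots_neg (splits_of_sq_eq_C_mul_prod q_ne_zero hq)
    (fun r hr => ?_) h0 ht
  by_contra! nonneg
  have prod_pos : 0 < ∏ i, (μ i * r + 1) :=
    Finset.prod_pos fun i _ => add_pos_of_nonneg_of_pos (mul_nonneg (hμ i) nonneg) one_pos
  have eval_sq : q.eval r ^ 2 = c * ∏ i, (μ i * r + 1) := by
    simpa [eval_prod] using congrArg (eval r) hq
  rw [isRoot_of_mem_roots hr, zero_pow two_ne_zero] at eval_sq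
  exact mul_ne_zero c_ne_zero prod_pos.ne' eval_sq.symm

end PositiveCoefficients

section DetPencil

open Polynomial

variable {ι : Type*} [Fintype ι] [DecidableEq ι] {A B : Matrix ι ι ℝ} {q : ℝ[X]}

theorem exists_sq_eq_C_mul_prod_of_eval_sq_eq_det (hA : Aᵀ = -A) (hB : B.PosDef)
    (hq : ∀ s : ℝ, q.eval (s ^ 2) = (B + s • A).det) :
    ∃ μ : ι → ℝ, (∀ i, 0 ≤ μ i) ∧ Fintype.card {i // μ i ≠ 0} = A.rank ∧
      q ^ 2 = C (B.det ^ 2) * ∏ i, (C (μ i) * X + 1) := by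
  obtain ⟨μ, nonneg, card_eq, det_sq⟩ := exists_det_add_smul_sq_eq_prod hA hB
  refine ⟨μ, nonneg, card_eq, eq_of_infinite_eval_eq _ _ ((Set.Ici_infinite 0).mono fun l hl => ?_)⟩
  have eval_sq := det_sq √l
  rw [← hq, Real.sq_sqrt hl] at eval_sq
  simpa [eval_prod, mul_comm l, add_comm (1 : ℝ)] using eval_sq

theorem coeff_zero_pos_of_eval_sq_eq_det (hB : B.PosDef)
    (hq : ∀ s : ℝ, q.eval (s ^ 2) = (B + s • A).det) : 0 < q.coeff 0 := by
  have eval_zero : q.eval 0 = B.det := by simpa using hq 0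
  rw [coeff_zero_eq_eval_zero, eval_zero]
  exact hB.det_pos

theorem two_mul_natDegree_eq_rank_of_eval_sq_eq_det (hA : Aᵀ = -A) (hB : B.PosDef)
    (hq : ∀ s : ℝ, q.eval (s ^ 2) = (B + s • A).det) : 2 * q.natDegree = A.rank := by
  obtain ⟨μ, -, card_eq, sq_eq⟩ := exists_sq_eq_C_mul_prod_of_eval_sq_eq_det hA hB hq
  have q_ne_zero : q ≠ 0 := by
    rintro rfl
    simpa using coeff_zero_pos_of_eval_sq_eq_det hB hq
  rw [two_mul_natDegree_of_sq_eq_C_mul_prod q_ne_zero sq_eq, ← card_eq]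

theorem coeff_pos_of_eval_sq_eq_det (hA : Aᵀ = -A) (hB : B.PosDef)
    (hq : ∀ s : ℝ, q.eval (s ^ 2) = (B + s • A).det) {t : ℕ} (ht : t ≤ q.natDegree) :
    0 < q.coeff t := by
  obtain ⟨μ, nonneg, -, sq_eq⟩ := exists_sq_eq_C_mul_prod_of_eval_sq_eq_det hA hB hq
  exact coeff_pos_of_sq_eq_C_mul_prod nonneg (coeff_zero_pos_of_eval_sq_eq_det hB hq) sq_eq ht

end DetPencil

theorem pfaffian_block_coeffs_pos_iff_rank (n : ℕ) (A B : Matrix (Fin n) (Fin n) ℝ)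
    (hA : Aᵀ = -A) (hBsymm : Bᵀ = B)
    (hBpd : ∀ x : Fin n → ℝ, x ≠ 0 → 0 < x ⬝ᵥ B *ᵥ x)
    (p : ℕ → ℝ)
    (hp : ∀ l : ℝ,
      (-1 : ℝ) ^ (n / 2) *
          pf ((Matrix.fromBlocks (-(l • A)) B (-B) A).submatrix
            (blockIndex n).symm (blockIndex n).symm)
        = ∑ t ∈ Finset.range (n / 2 + 1), p t * l ^ t) :
    ∀ t ≤ n / 2, (2 * t ≤ A.rank → 0 < p t) ∧ (A.rank < 2 * t → p t = 0) := by
  intro t ht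
  let q : Polynomial ℝ := ∑ t ∈ Finset.range (n / 2 + 1), .monomial t (p t)
  have coeff_q : q.coeff t = p t := by
    simp [q, Polynomial.finsetSum_coeff, Polynomial.coeff_monomial, Nat.lt_succ_iff.mpr ht]
  have eval_q (s : ℝ) : q.eval (s ^ 2) = (B + s • A).det := by
    rw [← neg_one_pow_mul_pf_fromBlocks hA hBsymm, hp]
    simp [q, Polynomial.eval_finsetSum]
  have hB : B.PosDef := .of_dotProduct_mulVec_pos hBsymm fun x hx => hBpd x hx
  have two_mul_natDegree := two_mul_natDegree_eq_rank_of_eval_sq_eq_det hA hB eval_q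
  rw [← coeff_q]
  exact ⟨fun h => coeff_pos_of_eval_sq_eq_det hA hB eval_q (by omega),
    fun h => Polynomial.coeff_eq_zero_of_natDegree_lt (by omega)⟩
end

section
/- Let A and B be symmetric real n×n matrices with B positive definite, and let h_0, ..., h_{⌊n/2⌋} be the real coefficients defined by the polynomial identity haf [[λA, B], [B, A]] = Σ_{t=0}^{⌊n/2⌋} h_t λ^t (as polynomials in the real variable λ). Then for each t, h_t = 0 if and only if haf A_{S,S} = 0 for every subset S of {1, ..., n} with |S| = 2t, where A_{S,S} denotes the submatrix of A with rows and columns indexed by S. -/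
open Matrix BigOperators

/-- The hafnian of an `n × n` real matrix: for `n = 2m` it is
`(1/(m! 2^m)) Σ_π C_{π(1),π(2)} ⋯ C_{π(2m-1),π(2m)}`, and it is `0` for odd `n`. -/
noncomputable def haf {n : ℕ} (C : Matrix (Fin n) (Fin n) ℝ) : ℝ :=
  if Even n then
    (1 / ((n / 2).factorial * 2 ^ (n / 2)) : ℝ) *
      ∑ π : Equiv.Perm (Fin n),
        ∏ i : Fin (n / 2), C (π ⟨2 * i.val, by omega⟩) (π ⟨2 * i.val + 1, by omega⟩)
  else 0

/-- The permanent of an `n × n` real matrix. -/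
noncomputable def per {n : ℕ} (M : Matrix (Fin n) (Fin n) ℝ) : ℝ :=
  ∑ π : Equiv.Perm (Fin n), ∏ i, M i (π i)

/-- The monotone enumeration of a subset `S` of `Fin n` of prescribed cardinality `k`,
as a map `Fin k → Fin n`. -/
def enum {n k : ℕ} (S : Finset (Fin n)) (h : S.card = k) : Fin k → Fin n :=
  fun i => (S.orderIsoOfFin h i : Fin n)

/-!
Write `q(x) = ∑ A i j x i x j`. Up to a positive factor, `haf A_{S,S}` with `#S = 2t` is the
coefficient of the squarefree monomial `∏ i, x i` in `q(x)^t ∏_{i ∉ S} x i`, and the block hafnian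
is the coefficient of `∏ i, x i y i` in `(l q(x) + xᵀ (B + Bᵀ) y + q(y))^n`. Factoring
`B + Bᵀ = Mᵀ M`, the middle term is `∑ k, (M x) k (M y) k`; by degree, the contribution of `l^t` is
then a positive multiple of a sum of squares, one for each coefficient of `∏ i, x i` in a product
`q(x)^t ∏ j, (M x) (f j)`. It vanishes iff all these coefficients do and, since `M` is invertible,
iff the same holds with the linear forms `M x` replaced by the variables, that is, iff all the
hafnians `haf A_{S,S}` vanish.
-/

section SumElim

variable {σ τ ι κ : Type*}

lemma bijective_sumElim_iff {f : ι → σ} {g : κ → σ} :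
    Function.Bijective (Sum.elim f g) ↔
      Function.Injective f ∧ Function.Injective g ∧ Set.range f = (Set.range g)ᶜ := by
  rw [Function.Bijective, ← Set.range_eq_univ, Set.Sum.elim_range, Sum.elim_injective,
    ← Set.disjoint_range_iff, eq_compl_iff_isCompl, isCompl_iff, codisjoint_iff, Set.top_eq_univ]
  simp only [Set.sup_eq_union, and_assoc]

lemma bijective_sumElim_iff_exists_equiv {e : τ → σ} {f : κ → σ} {g : ι → σ}
    (he : Function.Bijective (Sum.elim e f)) :
    Function.Bijective (Sum.elim g f) ↔ ∃ u : ι ≃ τ, e ∘ u = g := by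
  obtain ⟨e_inj, f_inj, e_range⟩ := bijective_sumElim_iff.mp he
  constructor
  · intro hg
    obtain ⟨g_inj, -, g_range⟩ := bijective_sumElim_iff.mp hg
    refine ⟨(Equiv.ofInjective g g_inj).trans ((Equiv.setCongr (g_range.trans e_range.symm)).trans
      (Equiv.ofInjective e e_inj).symm), ?_⟩
    ext i
    simp [Equiv.apply_ofInjective_symm]
  · rintro ⟨u, rfl⟩
    exact bijective_sumElim_iff.mpr ⟨e_inj.comp u.injective, f_inj, by simpa using e_range⟩

end SumElim

lemma eq_of_forall_sum_mul_pow_eq {R : Type*} [CommRing R] [IsDomain R] [Infinite R]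
    {s : Finset ℕ} {a b : ℕ → R} (h : ∀ x, ∑ i ∈ s, a i * x ^ i = ∑ i ∈ s, b i * x ^ i)
    {i : ℕ} (hi : i ∈ s) : a i = b i := by
  have hpoly : ∑ i ∈ s, Polynomial.monomial i (a i) = ∑ i ∈ s, Polynomial.monomial i (b i) :=
    Polynomial.funext fun x => by simpa [Polynomial.eval_finsetSum] using h x
  simpa [Polynomial.finsetSum_coeff, Polynomial.coeff_monomial, hi] using
    congrArg (Polynomial.coeff · i) hpoly

open scoped MatrixOrder in
lemma exists_eq_transpose_mul_self_of_posDef {σ : Type*} [Fintype σ] [DecidableEq σ]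
    {P : Matrix σ σ ℝ} (hP : P.PosDef) :
    ∃ M N : Matrix σ σ ℝ, P = Mᵀ * M ∧ N * M = 1 := by
  obtain ⟨M, hM, hPM⟩ := CStarAlgebra.isStrictlyPositive_iff_eq_star_mul_self.mp
    hP.isStrictlyPositive
  exact ⟨M, M⁻¹, by simpa [star_eq_conjTranspose] using hPM,
    nonsing_inv_mul M ((isUnit_iff_isUnit_det M).mp hM)⟩

lemma posDef_add_transpose {σ : Type*} [Fintype σ] {B : Matrix σ σ ℝ}
    (hB : ∀ x : σ → ℝ, x ≠ 0 → 0 < x ⬝ᵥ B *ᵥ x) : (B + Bᵀ).PosDef := by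
  refine posDef_iff_dotProduct_mulVec.mpr ⟨?_, fun x hx => ?_⟩
  · simp [IsHermitian, add_comm]
  · rw [star_trivial, add_mulVec, dotProduct_add, dotProduct_transpose_mulVec]
    exact add_pos (hB x hx) (hB x hx)

section MultilinearCoeff

open MvPolynomial

variable {σ τ κ R : Type*} [CommSemiring R]

/-- The coefficient of the squarefree monomial `∏ i, X i`, as a linear functional. Applied to
powers of a quadratic form it produces hafnians. -/
noncomputable def multilinearCoeff (σ R : Type*) [Fintype σ] [CommSemiring R] :
    MvPolynomial σ R →ₗ[R] R :=
  lcoeff R (Finsupp.equivFunOnFinite.symm 1)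

lemma multilinearCoeff_prod_X [Fintype σ] [Fintype κ] (g : κ → σ)
    [Decidable (Function.Bijective g)] :
    multilinearCoeff σ R (∏ k, X (g k)) = if Function.Bijective g then 1 else 0 := by
  classical
  have hmonomial : (∏ k, X (g k) : MvPolynomial σ R) =
      monomial (∑ k, Finsupp.single (g k) 1) 1 := by
    rw [monomial_sum_one]
    rfl
  have hexponent : ∑ k, Finsupp.single (g k) 1 = Finsupp.equivFunOnFinite.symm 1 ↔
      Function.Bijective g := by
    simp only [Function.bijective_iff_existsUnique, DFunLike.ext_iff, Finsupp.coe_finsetSum,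
      Finset.sum_apply, Finsupp.single_apply, Finsupp.equivFunOnFinite_symm_apply_apply,
      Pi.one_apply, Finset.sum_boole, Nat.cast_id, Finset.card_eq_one,
      Finset.singleton_iff_unique_mem, Finset.mem_filter_univ]
  simp only [hmonomial, multilinearCoeff, lcoeff_apply, coeff_monomial, hexponent]

lemma multilinearCoeff_rename_inl_mul_rename_inr [Fintype σ] [Fintype τ]
    (p : MvPolynomial σ R) (q : MvPolynomial τ R) :
    multilinearCoeff (σ ⊕ τ) R (rename Sum.inl p * rename Sum.inr q) =
      multilinearCoeff σ R p * multilinearCoeff τ R q := by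
  classical
  induction p using MvPolynomial.induction_on' with
  | add p p' hp hp' => simp only [map_add, add_mul, hp, hp']
  | monomial a c =>
    induction q using MvPolynomial.induction_on' with
    | add q q' hq hq' => simp only [map_add, mul_add, hq, hq']
    | monomial b d =>
      have hexponent : a.mapDomain Sum.inl + b.mapDomain Sum.inr =
          Finsupp.equivFunOnFinite.symm (1 : σ ⊕ τ → ℕ) ↔
            a = Finsupp.equivFunOnFinite.symm 1 ∧ b = Finsupp.equivFunOnFinite.symm 1 := by
        simp [DFunLike.ext_iff, Finsupp.mapDomain_apply Sum.inl_injective,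
          Finsupp.mapDomain_apply Sum.inr_injective, Finsupp.mapDomain_of_notMem_range]
      simp only [rename_monomial, monomial_mul, multilinearCoeff, lcoeff_apply, coeff_monomial,
        hexponent]
      split_ifs <;> simp_all

lemma multilinearCoeff_eq_zero_of_isHomogeneous [Fintype σ] {p : MvPolynomial σ R} {d : ℕ}
    (hp : p.IsHomogeneous d) (hd : Fintype.card σ ≠ d) : multilinearCoeff σ R p = 0 :=
  hp.coeff_eq_zero (by simpa [Finsupp.degree_eq_sum] using hd)

end MultilinearCoeff

section LinearForms

open MvPolynomial

variable {σ ι κ R E : Type*} [Fintype σ] [CommSemiring R] [AddCommMonoid E] [Module R E]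

lemma toMvPolynomial_eq_map_C_mulVec_X (M : Matrix ι σ R) :
    M.toMvPolynomial = M.map C *ᵥ X := by
  ext1 i
  simp [toMvPolynomial, mulVec, dotProduct, C_mul_X_eq_monomial]

lemma isHomogeneous_prod_toMvPolynomial [Fintype κ] (M : Matrix ι σ R) (f : κ → ι) :
    (∏ j, M.toMvPolynomial (f j)).IsHomogeneous (Fintype.card κ) := by
  simpa using IsHomogeneous.prod Finset.univ _ (fun _ => 1)
    fun j _ => M.toMvPolynomial_isHomogeneous (f j)

lemma map_mul_prod_toMvPolynomial_mul_eq_zero {ι' : Type*} [Fintype ι] [Fintype κ]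
    (L : MvPolynomial σ R →ₗ[R] E) (p : MvPolynomial σ R) (N : Matrix ι' ι R) (M : Matrix ι σ R)
    (hM : ∀ f : κ → ι, L (p * ∏ j, M.toMvPolynomial (f j)) = 0) (f : κ → ι') :
    L (p * ∏ j, (N * M).toMvPolynomial (f j)) = 0 := by
  classical
  have hrow (i : ι') : (N * M).toMvPolynomial i = ∑ k, N i k • M.toMvPolynomial k := by
    simp [toMvPolynomial_mul, toMvPolynomial_eq_map_C_mulVec_X N, mulVec, dotProduct, smul_eq_C_mul]
  simp only [hrow, Fintype.prod_sum, Finset.prod_smul, Finset.mul_sum, mul_smul_comm, map_sum,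
    map_smul, hM, smul_zero, Finset.sum_const_zero]

lemma forall_map_mul_prod_toMvPolynomial_eq_zero_iff [DecidableEq σ] [Fintype ι] [Fintype κ]
    (L : MvPolynomial σ R →ₗ[R] E) (p : MvPolynomial σ R) {M : Matrix ι σ R} {N : Matrix σ ι R}
    (hNM : N * M = 1) :
    (∀ f : κ → ι, L (p * ∏ j, M.toMvPolynomial (f j)) = 0) ↔
      ∀ f : κ → σ, L (p * ∏ j, X (f j)) = 0 := by
  constructor <;> intro h
  · simpa [hNM] using map_mul_prod_toMvPolynomial_mul_eq_zero L p N M h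
  · simpa using map_mul_prod_toMvPolynomial_mul_eq_zero L p M 1 (by simpa using h)

end LinearForms

section QuadPoly

open MvPolynomial

variable {σ τ ι R : Type*} [Fintype σ] [CommSemiring R]

/-- The quadratic form `∑ i j, A i j * X i * X j` of a matrix, as a polynomial. -/
noncomputable def quadPoly (A : Matrix σ σ R) : MvPolynomial σ R :=
  X ⬝ᵥ A.map C *ᵥ X

lemma quadPoly_eq_sum (A : Matrix σ σ R) :
    quadPoly A = ∑ p : Fin 2 → σ, C (A (p 0) (p 1)) * ∏ j, X (p j) := by
  rw [← (finTwoArrowEquiv σ).symm.sum_comp, Fintype.sum_prod_type]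
  simp [quadPoly, dotProduct, mulVec, Finset.mul_sum, mul_left_comm]

lemma quadPoly_isHomogeneous (A : Matrix σ σ R) : (quadPoly A).IsHomogeneous 2 := by
  rw [quadPoly_eq_sum]
  refine IsHomogeneous.sum _ _ _ fun p _ => IsHomogeneous.C_mul ?_ _
  simpa using IsHomogeneous.prod Finset.univ _ (fun _ => 1) fun j _ => isHomogeneous_X R (p j)

lemma quadPoly_pow (A : Matrix σ σ R) (m : ℕ) :
    quadPoly A ^ m = ∑ g : Fin m × Fin 2 → σ,
      (∏ i, A (g (i, 0)) (g (i, 1))) • ∏ k, X (g k) := by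
  rw [quadPoly_eq_sum, Fintype.sum_pow, ← (Equiv.curry (Fin m) (Fin 2) σ).sum_comp]
  simp [Finset.prod_mul_distrib, Fintype.prod_prod_type, smul_eq_C_mul]

lemma quadPoly_smul (l : R) (A : Matrix σ σ R) : quadPoly (l • A) = l • quadPoly A := by
  simp [quadPoly_eq_sum, Finset.smul_sum, smul_eq_C_mul, mul_assoc]

lemma rename_quadPoly (f : σ → τ) (A : Matrix σ σ R) :
    rename f (quadPoly A) = (X ∘ f) ⬝ᵥ A.map C *ᵥ (X ∘ f) := by
  simp [quadPoly, dotProduct, mulVec]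

variable [Fintype τ]

lemma quadPoly_fromBlocks (A : Matrix σ σ R) (B : Matrix σ τ R) (B' : Matrix τ σ R)
    (D : Matrix τ τ R) :
    quadPoly (fromBlocks A B B' D) = rename Sum.inl (quadPoly A) +
      (X ∘ Sum.inl) ⬝ᵥ (B + B'ᵀ).map C *ᵥ (X ∘ Sum.inr) + rename Sum.inr (quadPoly D) := by
  have hX : (X : σ ⊕ τ → MvPolynomial (σ ⊕ τ) R) = Sum.elim (X ∘ Sum.inl) (X ∘ Sum.inr) :=
    (Sum.elim_comp_inl_inr X).symm
  rw [quadPoly, hX, fromBlocks_map, fromBlocks_mulVec, sumElim_dotProduct_sumElim]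
  simp only [Sum.elim_comp_inl, Sum.elim_comp_inr, rename_quadPoly, dotProduct_add,
    Matrix.map_add C (map_add C), add_mulVec, transpose_map, dotProduct_transpose_mulVec]
  ring

lemma dotProduct_transpose_mul_map_C_mulVec [Fintype ι] (M : Matrix ι σ R) (N : Matrix ι τ R) :
    (X ∘ Sum.inl) ⬝ᵥ (Mᵀ * N).map C *ᵥ (X ∘ Sum.inr) =
      ∑ k, rename Sum.inl (M.toMvPolynomial k) * rename Sum.inr (N.toMvPolynomial k) := by
  rw [Matrix.map_mul, ← mulVec_mulVec, transpose_map, dotProduct_transpose_mulVec,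
    dotProduct_comm]
  simp [dotProduct, toMvPolynomial_eq_map_C_mulVec_X, mulVec]

end QuadPoly

section CrossTerms

open MvPolynomial

variable {σ τ ι R : Type*} [Fintype σ] [CommSemiring R]

lemma multilinearCoeff_quadPoly_pow_mul_prod_toMvPolynomial_eq_zero (A : Matrix σ σ R)
    (M : Matrix ι σ R) {a b : ℕ} (h : Fintype.card σ ≠ 2 * a + b) (f : Fin b → ι) :
    multilinearCoeff σ R (quadPoly A ^ a * ∏ j, M.toMvPolynomial (f j)) = 0 :=
  multilinearCoeff_eq_zero_of_isHomogeneous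
    (((quadPoly_isHomogeneous A).pow a).mul (isHomogeneous_prod_toMvPolynomial M f)) (by simpa)

variable [Fintype ι]

lemma multilinearCoeff_rename_mul_sum_pow_mul_rename [Fintype τ] (p : MvPolynomial σ R)
    (q : MvPolynomial τ R) (u : ι → MvPolynomial σ R) (v : ι → MvPolynomial τ R) (b : ℕ) :
    multilinearCoeff (σ ⊕ τ) R (rename Sum.inl p *
        (∑ k, rename Sum.inl (u k) * rename Sum.inr (v k)) ^ b * rename Sum.inr q) =
      ∑ f : Fin b → ι, multilinearCoeff σ R (p * ∏ j, u (f j)) *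
        multilinearCoeff τ R (q * ∏ j, v (f j)) := by
  simp only [Fintype.sum_pow, Finset.mul_sum, Finset.sum_mul, map_sum,
    ← multilinearCoeff_rename_inl_mul_rename_inr, map_mul, map_prod, Finset.prod_mul_distrib]
  refine Finset.sum_congr rfl fun f _ => congrArg _ ?_
  ring

/-- The sum of squares that is proportional to the coefficient of `l ^ t` in the hafnian of
`fromBlocks (l • A) B B' A`, when `B + B'ᵀ = Mᵀ * M`. It is meaningful for
`2 * t ≤ Fintype.card σ` only, because of the truncated subtraction. -/
noncomputable def sumSqCoeff (A : Matrix σ σ R) (M : Matrix ι σ R) (t : ℕ) : R :=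
  ∑ f : Fin (Fintype.card σ - 2 * t) → ι,
    multilinearCoeff σ R (quadPoly A ^ t * ∏ j, M.toMvPolynomial (f j)) ^ 2

lemma multilinearCoeff_rename_pow_mul_add_pow (A : Matrix σ σ R) (M : Matrix ι σ R) (a : ℕ) :
    multilinearCoeff (σ ⊕ σ) R (rename Sum.inl (quadPoly A) ^ a *
        (rename Sum.inr (quadPoly A) +
          ∑ k, rename Sum.inl (M.toMvPolynomial k) * rename Sum.inr (M.toMvPolynomial k)) ^
            (Fintype.card σ - a)) =
      (Fintype.card σ - a).choose a * sumSqCoeff A M a := by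
  set n := Fintype.card σ with hn
  have hterm (c : ℕ) : multilinearCoeff (σ ⊕ σ) R (rename Sum.inl (quadPoly A) ^ a *
      (rename Sum.inr (quadPoly A) ^ c *
        (∑ k, rename Sum.inl (M.toMvPolynomial k) * rename Sum.inr (M.toMvPolynomial k)) ^
          (n - a - c) * ((n - a).choose c : MvPolynomial (σ ⊕ σ) R))) =
      (n - a).choose c * ∑ f : Fin (n - a - c) → ι,
        multilinearCoeff σ R (quadPoly A ^ a * ∏ j, M.toMvPolynomial (f j)) *
          multilinearCoeff σ R (quadPoly A ^ c * ∏ j, M.toMvPolynomial (f j)) := by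
    rw [← multilinearCoeff_rename_mul_sum_pow_mul_rename, ← nsmul_eq_mul, ← map_nsmul]
    simp only [map_pow, nsmul_eq_mul]
    congr 1
    ring
  -- Comparing degrees in the two blocks of variables, only the term with `c = a` survives.
  rw [add_pow, Finset.mul_sum, map_sum, Finset.sum_eq_single a]
  · rw [hterm, sumSqCoeff, ← hn, two_mul, ← Nat.sub_sub]
    simp only [sq]
  · intro c hc hca
    rw [Finset.mem_range] at hc
    rw [hterm, Finset.sum_eq_zero, mul_zero]
    intro f _
    rw [multilinearCoeff_quadPoly_pow_mul_prod_toMvPolynomial_eq_zero A M (by lia) f, zero_mul]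
  · intro ha
    rw [hterm, Nat.choose_eq_zero_of_lt (by simpa using ha), Nat.cast_zero, zero_mul]

lemma multilinearCoeff_quadPoly_fromBlocks_pow (A B B' : Matrix σ σ R) (M : Matrix ι σ R)
    (hM : B + B'ᵀ = Mᵀ * M) (l : R) :
    multilinearCoeff (σ ⊕ σ) R (quadPoly (fromBlocks (l • A) B B' A) ^ Fintype.card σ) =
      ∑ t ∈ Finset.range (Fintype.card σ / 2 + 1),
        (Fintype.card σ).choose t * (Fintype.card σ - t).choose t * sumSqCoeff A M t * l ^ t := by
  set n := Fintype.card σ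
  rw [quadPoly_fromBlocks, hM, dotProduct_transpose_mul_map_C_mulVec, add_assoc, quadPoly_smul,
    map_smul, add_comm (∑ k, _), add_pow, map_sum]
  have hterm (t : ℕ) : multilinearCoeff (σ ⊕ σ) R ((l • rename Sum.inl (quadPoly A)) ^ t *
      (rename Sum.inr (quadPoly A) +
        ∑ k, rename Sum.inl (M.toMvPolynomial k) * rename Sum.inr (M.toMvPolynomial k)) ^ (n - t) *
          (n.choose t : MvPolynomial (σ ⊕ σ) R)) =
      n.choose t * (n - t).choose t * sumSqCoeff A M t * l ^ t := by
    rw [← nsmul_eq_mul', map_nsmul, smul_pow, smul_mul_assoc, map_smul,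
      multilinearCoeff_rename_pow_mul_add_pow, nsmul_eq_mul, smul_eq_mul]
    ring
  simp only [hterm]
  refine (Finset.sum_subset (Finset.range_subset_range.mpr (by lia)) fun t _ ht => ?_).symm
  have hlt : n - t < t := by
    rw [Finset.mem_range] at ht
    lia
  rw [Nat.choose_eq_zero_of_lt hlt, Nat.cast_zero, mul_zero, zero_mul, zero_mul]

end CrossTerms

section Hafnian

open MvPolynomial

variable {σ τ κ R : Type*}

open scoped Classical in
lemma multilinearCoeff_quadPoly_pow_mul_prod_X [CommSemiring R] [Fintype σ] [Fintype κ]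
    (A : Matrix σ σ R) (m : ℕ) (f : κ → σ) :
    multilinearCoeff σ R (quadPoly A ^ m * ∏ k, X (f k)) =
      ∑ g : Fin m × Fin 2 → σ,
        if Function.Bijective (Sum.elim g f) then ∏ i, A (g (i, 0)) (g (i, 1)) else 0 := by
  rw [quadPoly_pow, Finset.sum_mul, map_sum]
  refine Finset.sum_congr rfl fun g _ => ?_
  have hprod := multilinearCoeff_prod_X (R := R) (Sum.elim g f)
  rw [Fintype.prod_sum_type] at hprod
  simp only [Sum.elim_inl, Sum.elim_inr] at hprod
  rw [smul_mul_assoc, map_smul, hprod, smul_eq_mul, mul_ite, mul_one, mul_zero]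

lemma multilinearCoeff_quadPoly_pow_mul_prod_X_eq_sum_equiv [CommSemiring R] [Fintype σ]
    [Fintype τ] [DecidableEq τ] [Fintype κ] (A : Matrix σ σ R) (m : ℕ) {e : τ → σ} {f : κ → σ}
    (he : Function.Bijective (Sum.elim e f)) :
    multilinearCoeff σ R (quadPoly A ^ m * ∏ k, X (f k)) =
      ∑ u : Fin m × Fin 2 ≃ τ, ∏ i, A (e (u (i, 0))) (e (u (i, 1))) := by
  have e_inj := (bijective_sumElim_iff.mp he).1
  rw [multilinearCoeff_quadPoly_pow_mul_prod_X]
  refine (Fintype.sum_of_injective (fun u : Fin m × Fin 2 ≃ τ => e ∘ u) ?_ _ _ ?_ ?_).symm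
  · exact fun u v huv => DFunLike.coe_injective (e_inj.comp_left huv)
  · exact fun g hg => if_neg fun hbij => hg ((bijective_sumElim_iff_exists_equiv he).mp hbij)
  · exact fun u => (if_pos ((bijective_sumElim_iff_exists_equiv he).mpr ⟨u, rfl⟩)).symm

lemma haf_two_mul_eq_sum_equiv {m : ℕ} (A : Matrix (Fin (2 * m)) (Fin (2 * m)) ℝ) :
    haf A = (m.factorial * 2 ^ m : ℝ)⁻¹ *
      ∑ u : Fin m × Fin 2 ≃ Fin (2 * m), ∏ i, A (u (i, 0)) (u (i, 1)) := by
  have hm : 2 * m / 2 = m := by lia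
  let pairing : Fin m × Fin 2 ≃ Fin (2 * m) := finProdFinEquiv.trans (finCongr (mul_comm m 2))
  rw [haf, if_pos (even_two_mul m), one_div,
    ← (Equiv.equivCongr pairing.symm (Equiv.refl (Fin (2 * m)))).sum_comp]
  congr 1
  · rw [hm]
  refine Finset.sum_congr rfl fun π _ => ?_
  rw [← (finCongr hm).prod_comp]
  refine Finset.prod_congr rfl fun i _ => ?_
  have hfst : pairing (finCongr hm i, 0) = ⟨2 * i.val, by lia⟩ := by
    simp [pairing, finProdFinEquiv]
  have hsnd : pairing (finCongr hm i, 1) = ⟨2 * i.val + 1, by lia⟩ := by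
    simp [pairing, finProdFinEquiv, add_comm]
  rw [← hfst, ← hsnd]
  rfl

lemma haf_submatrix_eq_multilinearCoeff [Fintype σ] [Fintype κ] (A : Matrix σ σ ℝ) {m : ℕ}
    {e : Fin (2 * m) → σ} {f : κ → σ} (he : Function.Bijective (Sum.elim e f)) :
    haf (A.submatrix e e) = (m.factorial * 2 ^ m : ℝ)⁻¹ *
      multilinearCoeff σ ℝ (quadPoly A ^ m * ∏ k, X (f k)) := by
  rw [haf_two_mul_eq_sum_equiv, multilinearCoeff_quadPoly_pow_mul_prod_X_eq_sum_equiv A m he]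
  rfl

lemma haf_submatrix_blockIndex_symm {n : ℕ} (A : Matrix (Fin n ⊕ Fin n) (Fin n ⊕ Fin n) ℝ) :
    haf (A.submatrix (blockIndex n).symm (blockIndex n).symm) =
      (n.factorial * 2 ^ n : ℝ)⁻¹ * multilinearCoeff (Fin n ⊕ Fin n) ℝ (quadPoly A ^ n) := by
  have he : Function.Bijective (Sum.elim (blockIndex n).symm (Fin.elim0 (α := Fin n ⊕ Fin n))) :=
    bijective_sumElim_iff.mpr
      ⟨(blockIndex n).symm.injective, Function.injective_of_subsingleton _, by simp⟩
  simpa using haf_submatrix_eq_multilinearCoeff A he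

lemma enum_eq_orderEmbOfFin {n k : ℕ} (S : Finset (Fin n)) (h : S.card = k) :
    enum S h = S.orderEmbOfFin h :=
  rfl

lemma bijective_sumElim_enum_iff {n k : ℕ} {S : Finset (Fin n)} (h : S.card = k)
    {f : κ → Fin n} :
    Function.Bijective (Sum.elim (enum S h) f) ↔ Function.Injective f ∧ Set.range f = Sᶜ := by
  rw [bijective_sumElim_iff, enum_eq_orderEmbOfFin, Finset.range_orderEmbOfFin, eq_compl_comm,
    Finset.coe_compl]
  exact and_iff_right (S.orderEmbOfFin h).injective

lemma forall_multilinearCoeff_eq_zero_iff_forall_haf_eq_zero {n t k : ℕ}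
    (A : Matrix (Fin n) (Fin n) ℝ) (hk : 2 * t + k = n) :
    (∀ f : Fin k → Fin n,
        multilinearCoeff (Fin n) ℝ (quadPoly A ^ t * ∏ j, X (f j)) = 0) ↔
      ∀ S : Finset (Fin n), ∀ hS : S.card = 2 * t,
        haf (A.submatrix (enum S hS) (enum S hS)) = 0 := by
  classical
  constructor
  · intro hcoeff S hS
    have hcompl : Sᶜ.card = k := by
      rw [Finset.card_compl, hS, Fintype.card_fin]
      lia
    have he : Function.Bijective (Sum.elim (enum S hS) (Sᶜ.orderEmbOfFin hcompl)) :=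
      (bijective_sumElim_enum_iff hS).mpr ⟨(Sᶜ.orderEmbOfFin hcompl).injective, by simp⟩
    rw [haf_submatrix_eq_multilinearCoeff A he, hcoeff, mul_zero]
  · intro hhaf f
    by_cases f_inj : Function.Injective f
    · have hS : (Finset.univ.image f)ᶜ.card = 2 * t := by
        rw [Finset.card_compl, Finset.card_image_of_injective _ f_inj, Finset.card_fin,
          Fintype.card_fin]
        lia
      have he := (bijective_sumElim_enum_iff hS).mpr ⟨f_inj, by simp⟩
      have hzero := hhaf _ hS
      rw [haf_submatrix_eq_multilinearCoeff A he] at hzero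
      exact (mul_eq_zero.mp hzero).resolve_left (by positivity)
    · rw [multilinearCoeff_quadPoly_pow_mul_prod_X]
      exact Finset.sum_eq_zero fun g _ =>
        if_neg fun hbij => f_inj (bijective_sumElim_iff.mp hbij).2.1

end Hafnian

theorem haf_fromBlocks_eq_sum {n : ℕ} {ι : Type*} [Fintype ι] (A B B' : Matrix (Fin n) (Fin n) ℝ)
    (M : Matrix ι (Fin n) ℝ) (hM : B + B'ᵀ = Mᵀ * M) (l : ℝ) :
    haf ((fromBlocks (l • A) B B' A).submatrix (blockIndex n).symm (blockIndex n).symm) =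
      ∑ t ∈ Finset.range (n / 2 + 1),
        ((n.factorial * 2 ^ n : ℝ)⁻¹ * (n.choose t * (n - t).choose t)) * sumSqCoeff A M t *
          l ^ t := by
  have hpow := multilinearCoeff_quadPoly_fromBlocks_pow A B B' M hM l
  rw [Fintype.card_fin] at hpow
  rw [haf_submatrix_blockIndex_symm, hpow, Finset.mul_sum]
  simp only [mul_assoc]

lemma sumSqCoeff_eq_zero_iff {n t : ℕ} {ι : Type*} [Fintype ι] (A : Matrix (Fin n) (Fin n) ℝ)
    {M : Matrix ι (Fin n) ℝ} {N : Matrix (Fin n) ι ℝ} (hNM : N * M = 1) (ht : t ≤ n / 2) :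
    sumSqCoeff A M t = 0 ↔ ∀ S : Finset (Fin n), ∀ hS : S.card = 2 * t,
      haf (A.submatrix (enum S hS) (enum S hS)) = 0 := by
  have hk : 2 * t + (Fintype.card (Fin n) - 2 * t) = n := by
    rw [Fintype.card_fin]
    lia
  rw [← forall_multilinearCoeff_eq_zero_iff_forall_haf_eq_zero A hk,
    ← forall_map_mul_prod_toMvPolynomial_eq_zero_iff _ _ hNM, sumSqCoeff,
    Finset.sum_eq_zero_iff_of_nonneg fun _ _ => sq_nonneg _]
  simp only [Finset.mem_univ, true_implies, sq_eq_zero_iff]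

theorem hafnian_block_coeff_eq_zero_iff_general (n : ℕ) (A B : Matrix (Fin n) (Fin n) ℝ)
    (hBpd : ∀ x : Fin n → ℝ, x ≠ 0 → 0 < x ⬝ᵥ B *ᵥ x)
    (h : ℕ → ℝ)
    (hh : ∀ l : ℝ,
      haf ((Matrix.fromBlocks (l • A) B B A).submatrix
          (blockIndex n).symm (blockIndex n).symm)
        = ∑ t ∈ Finset.range (n / 2 + 1), h t * l ^ t) :
    ∀ t ≤ n / 2,
      (h t = 0 ↔ ∀ S : Finset (Fin n), ∀ hS : S.card = 2 * t,
        haf (A.submatrix (enum S hS) (enum S hS)) = 0) := by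
  intro t ht
  obtain ⟨M, N, hM, hNM⟩ := exists_eq_transpose_mul_self_of_posDef (posDef_add_transpose hBpd)
  have hcoeff : h t =
      (n.factorial * 2 ^ n : ℝ)⁻¹ * (n.choose t * (n - t).choose t) * sumSqCoeff A M t :=
    eq_of_forall_sum_mul_pow_eq
      (fun l => (hh l).symm.trans (haf_fromBlocks_eq_sum A B B M hM l))
      (Finset.mem_range_succ_iff.mpr ht)
  have hchoose : 0 < n.choose t := Nat.choose_pos (by lia)
  have hchoose' : 0 < (n - t).choose t := Nat.choose_pos (by lia)
  have hconst : (n.factorial * 2 ^ n : ℝ)⁻¹ * (n.choose t * (n - t).choose t) ≠ 0 := by positivity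
  rw [hcoeff, mul_eq_zero, or_iff_right hconst, sumSqCoeff_eq_zero_iff A hNM ht]

theorem hafnian_block_coeff_eq_zero_iff (n : ℕ) (A B : Matrix (Fin n) (Fin n) ℝ)
    (hA : Aᵀ = A) (hBsymm : Bᵀ = B)
    (hBpd : ∀ x : Fin n → ℝ, x ≠ 0 → 0 < x ⬝ᵥ B *ᵥ x)
    (h : ℕ → ℝ)
    (hh : ∀ l : ℝ,
      haf ((Matrix.fromBlocks (l • A) B B A).submatrix
          (blockIndex n).symm (blockIndex n).symm)
        = ∑ t ∈ Finset.range (n / 2 + 1), h t * l ^ t) :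
    ∀ t ≤ n / 2,
      (h t = 0 ↔ ∀ S : Finset (Fin n), ∀ hS : S.card = 2 * t,
        haf (A.submatrix (enum S hS) (enum S hS)) = 0) := by
  exact hafnian_block_coeff_eq_zero_iff_general n A B hBpd h hh
end
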